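/- Let G be the presented group on eleven generators A, B, C, D, E, F, G, H, I, J, K with the eleven relators: (1) BCB⁻¹C⁻¹, (2) DED⁻¹E⁻¹, (3) DB⁻¹FBA⁻¹D⁻¹AF⁻¹, (4) GA⁻¹EAC⁻¹G⁻¹CE⁻¹, (5) HDB⁻¹H⁻¹BD⁻¹, (6) IEC⁻¹I⁻¹CE⁻¹, (7) JAF⁻¹HFA⁻¹E⁻¹J⁻¹EH⁻¹, (8) JAG⁻¹IGA⁻¹D⁻¹J⁻¹DI⁻¹, (9) HC⁻¹KCF⁻¹H⁻¹FK⁻¹, (10) KG⁻¹IGB⁻¹K⁻¹BI⁻¹, (11) HC⁻¹IB⁻¹CH⁻¹BI⁻¹. Then the abelianization of G is isomorphic to the free abelian group ℤ¹¹. -/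

import Mathlib

/-- The eleven relators of the presentation of the fundamental group of the
permutohedral space, on the eleven generators `A, B, …, K` (indexed by `0, …, 10`). -/
def permRels : Set (FreeGroup (Fin 11)) :=
  let A := FreeGroup.of (0 : Fin 11)
  let B := FreeGroup.of (1 : Fin 11)
  let C := FreeGroup.of (2 : Fin 11)
  let D := FreeGroup.of (3 : Fin 11)
  let E := FreeGroup.of (4 : Fin 11)
  let F := FreeGroup.of (5 : Fin 11)
  let G := FreeGroup.of (6 : Fin 11)
  let H := FreeGroup.of (7 : Fin 11)
  let I := FreeGroup.of (8 : Fin 11)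
  let J := FreeGroup.of (9 : Fin 11)
  let K := FreeGroup.of (10 : Fin 11)
  {B * C * B⁻¹ * C⁻¹,
   D * E * D⁻¹ * E⁻¹,
   D * B⁻¹ * F * B * A⁻¹ * D⁻¹ * A * F⁻¹,
   G * A⁻¹ * E * A * C⁻¹ * G⁻¹ * C * E⁻¹,
   H * D * B⁻¹ * H⁻¹ * B * D⁻¹,
   I * E * C⁻¹ * I⁻¹ * C * E⁻¹,
   J * A * F⁻¹ * H * F * A⁻¹ * E⁻¹ * J⁻¹ * E * H⁻¹,
   J * A * G⁻¹ * I * G * A⁻¹ * D⁻¹ * J⁻¹ * D * I⁻¹,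
   H * C⁻¹ * K * C * F⁻¹ * H⁻¹ * F * K⁻¹,
   K * G⁻¹ * I * G * B⁻¹ * K⁻¹ * B * I⁻¹,
   H * C⁻¹ * I * B⁻¹ * C * H⁻¹ * B * I⁻¹}

/-!
In each relator every generator occurs as often as its inverse, so the relators become trivial in
`Abelianization (FreeGroup (Fin 11))`: imposing them leaves the abelianization of the free group
unchanged, and that is free abelian on the eleven generators.
-/

section Surjective

variable {G H : Type*} [Group G] [Group H] {f : G →* H}

theorem abelianization_of_eq_one_iff {g : G} : Abelianization.of g = 1 ↔ g ∈ commutator G := by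
  rw [← MonoidHom.mem_ker, Abelianization.ker_of]

theorem abelianization_of_surjective :
    Function.Surjective (Abelianization.of : G →* Abelianization G) :=
  QuotientGroup.mk_surjective

theorem map_commutator_of_surjective (hf : Function.Surjective f) :
    (commutator G).map f = commutator H := by
  rw [map_commutator_eq, MonoidHom.range_eq_top.2 hf, ← commutator_def]

theorem comap_commutator_of_ker_le (hf : Function.Surjective f)
    (hker : f.ker ≤ commutator G) : (commutator H).comap f = commutator G := by
  rw [← map_commutator_of_surjective hf, Subgroup.comap_map_eq_self hker]

theorem abelianization_map_surjective (hf : Function.Surjective f) :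
    Function.Surjective (Abelianization.map f) := by
  have hcomp : Function.Surjective (Abelianization.map f ∘ Abelianization.of) :=
    abelianization_of_surjective.comp hf
  exact hcomp.of_comp

theorem abelianization_map_injective_of_ker_le (hf : Function.Surjective f)
    (hker : f.ker ≤ commutator G) : Function.Injective (Abelianization.map f) := by
  refine (injective_iff_map_eq_one _).2 fun x hx => ?_
  obtain ⟨g, rfl⟩ := abelianization_of_surjective x
  rw [Abelianization.map_of, abelianization_of_eq_one_iff] at hx
  rwa [abelianization_of_eq_one_iff, ← comap_commutator_of_ker_le hf hker]

/-- The isomorphism of abelianizations induced by a surjective homomorphism whose kernel is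
contained in the commutator subgroup; it is used for the quotient map onto a presented group. -/
noncomputable def abelianizationEquivOfSurjective (hf : Function.Surjective f)
    (hker : f.ker ≤ commutator G) : Abelianization G ≃* Abelianization H :=
  MulEquiv.ofBijective (Abelianization.map f)
    ⟨abelianization_map_injective_of_ker_le hf hker, abelianization_map_surjective hf⟩

end Surjective

section Presentation

variable {α : Type*} {rels : Set (FreeGroup α)}

theorem ker_presentedGroup_mk :
    (PresentedGroup.mk rels).ker = Subgroup.normalClosure rels :=
  QuotientGroup.ker_mk' _

theorem ker_presentedGroup_mk_le_commutator (h : rels ⊆ commutator (FreeGroup α)) :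
    (PresentedGroup.mk rels).ker ≤ commutator (FreeGroup α) := by
  rw [ker_presentedGroup_mk]
  exact Subgroup.normalClosure_le_normal h

/-- The abelianization of a free group as a free abelian group, written multiplicatively. -/
noncomputable def freeGroupAbelianizationEquivFinsupp (α : Type*) :
    Abelianization (FreeGroup α) ≃* Multiplicative (α →₀ ℤ) :=
  (FreeAbelianGroup.equivFinsupp α).toMultiplicativeRight

/-- The abelianization of a group presented by relators in the commutator subgroup, as the free
abelian group on the generators. -/
noncomputable def presentedGroupAbelianizationEquivFinsupp
    (h : rels ⊆ commutator (FreeGroup α)) :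
    Abelianization (PresentedGroup rels) ≃* Multiplicative (α →₀ ℤ) :=
  (abelianizationEquivOfSurjective (PresentedGroup.mk_surjective rels)
    (ker_presentedGroup_mk_le_commutator h)).symm.trans (freeGroupAbelianizationEquivFinsupp α)

end Presentation

theorem abelianization_of_eq_one_of_mem_permRels {r : FreeGroup (Fin 11)} (hr : r ∈ permRels) :
    Abelianization.of r = 1 := by
  simp only [permRels, Set.mem_insert_iff, Set.mem_singleton_iff] at hr
  rw [← ofMul_eq_zero]
  rcases hr with rfl | rfl | rfl | rfl | rfl | rfl | rfl | rfl | rfl | rfl | rfl <;>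
    simp only [map_mul, map_inv, ofMul_mul, ofMul_inv] <;>
    abel

theorem permRels_subset_commutator : permRels ⊆ commutator (FreeGroup (Fin 11)) := fun _ hr =>
  abelianization_of_eq_one_iff.1 (abelianization_of_eq_one_of_mem_permRels hr)

/-- The abelianization of the fundamental group of the permutohedral space is the free
abelian group `ℤ¹¹`. -/
theorem stmt5 :
    Nonempty (Abelianization (PresentedGroup permRels) ≃*
      Multiplicative (Fin 11 → ℤ)) := by
  have e : Abelianization (PresentedGroup permRels) ≃* Multiplicative (Fin 11 →₀ ℤ) :=
    presentedGroupAbelianizationEquivFinsupp permRels_subset_commutator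
  exact ⟨e.trans (Finsupp.linearEquivFunOnFinite ℤ ℤ (Fin 11)).toAddEquiv.toMultiplicative⟩
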